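/- Let d ≥ 1, M ≥ 0, c₀ > 0, θ_c > 0. Let D : ℝ^{d×d} → ℝ^{d×d} be a linear map such that D(A) is symmetric for every A, D is self-adjoint with respect to the Frobenius inner product, and c₀ |A|² ≤ D(A) : A for every symmetric A; set Ċ := Ḟᵀ F + Fᵀ Ḟ and ξ(F, Ḟ) := D(Ċ) : Ċ. Let W : GL⁺(d) × (0, ∞) → ℝ satisfy: for each θ > 0 the map F ↦ W(F, θ) is differentiable on GL⁺(d) with Fréchet derivative represented by a matrix S(F, θ) (i.e. the derivative applied to G equals S(F, θ) : G); W(QF, θ) = W(F, θ) for all Q ∈ SO(d), F ∈ GL⁺(d), θ > 0; for each F ∈ GL⁺(d) the map θ ↦ S(F, θ) is twice differentiable on (0, ∞) with ‖∂_θ S(F, θ)‖ ≤ M(1 + |F|) / max(θ, 1) and ‖∂_θ² S(F, θ)‖ ≤ M(1 + |F|) / max(θ, 1)² for all θ > 0. Then there is a constant C depending only on M and c₀ such that for all F ∈ GL⁺(d), Ḟ ∈ ℝ^{d×d}, and θ > 0: |θ · (∂_θ S(F, θ)) : Ḟ| ≤ C · |F⁻¹| · (1 + |F|) · (θ_c ‖∂_θ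 S(F, θ_c)‖ + min(|θ − θ_c|, 1)) · ξ(F, Ḟ)^{1/2}. -/

import Mathlib

attribute [local instance] Matrix.frobeniusNormedAddCommGroup Matrix.frobeniusNormedSpace

open Matrix

section FrobeniusPairing

variable {m n : Type*} [Fintype m] [Fintype n]

/-- Cauchy–Schwarz inequality for the Frobenius inner product. -/
theorem abs_trace_transpose_mul_le (A B : Matrix m n ℝ) :
    |trace (Aᵀ * B)| ≤ ‖A‖ * ‖B‖ := by
  have norm_eq (X : Matrix m n ℝ) : ‖X‖ = √(∑ p : n × m, X p.2 p.1 ^ 2) := by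
    rw [frobenius_norm_def, ← Real.sqrt_eq_rpow, Finset.sum_comm, Fintype.sum_prod_type]
    simp
  have trace_eq : trace (Aᵀ * B) = ∑ p : n × m, A p.2 p.1 * B p.2 p.1 := by
    simp [Fintype.sum_prod_type, trace, mul_apply]
  rw [norm_eq, norm_eq, trace_eq, ← Real.sqrt_mul (by positivity)]
  exact Real.abs_le_sqrt (Finset.sum_mul_sq_le_sq_mul_sq _ _ _)

/-- The Frobenius pairing with a fixed matrix commutes with differentiation. -/
theorem HasDerivAt.trace_transpose_mul {f : ℝ → Matrix m n ℝ} {f' : Matrix m n ℝ} {t : ℝ}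
    (hf : HasDerivAt f f' t) (G : Matrix m n ℝ) :
    HasDerivAt (fun s => trace ((f s)ᵀ * G)) (trace (f'ᵀ * G)) t := by
  let pairing : Matrix m n ℝ →ₗ[ℝ] ℝ :=
    { toFun := fun X => trace (Xᵀ * G)
      map_add' := by simp [Matrix.add_mul]
      map_smul' := by simp }
  exact pairing.toContinuousLinearMap.hasFDerivAt.comp_hasDerivAt t hf

end FrobeniusPairing

section SkewSymmetric

variable {n : Type*} [Fintype n]

theorem transpose_exp_mul_exp_of_skew [DecidableEq n] {A : Matrix n n ℝ} (hA : Aᵀ = -A) :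
    (NormedSpace.exp A)ᵀ * NormedSpace.exp A = 1 := by
  rw [← exp_transpose, hA, exp_neg]
  exact nonsing_inv_mul _ ((isUnit_iff_isUnit_det _).1 (isUnit_exp A))

theorem det_exp_of_skew [DecidableEq n] {A : Matrix n n ℝ} (hA : Aᵀ = -A) :
    (NormedSpace.exp A).det = 1 := by
  have half_skew : ((1 / 2 : ℝ) • A)ᵀ = -((1 / 2 : ℝ) • A) := by simp [hA]
  have double : A = 2 • ((1 / 2 : ℝ) • A) := by
    rw [two_nsmul, ← add_smul]; norm_num
  have hdet := congrArg det (transpose_exp_mul_exp_of_skew half_skew)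
  rw [det_mul, det_transpose, det_one] at hdet
  rw [double, exp_nsmul, det_pow, sq, hdet]

/-- If `S` annihilates the tangent directions `A * F` of the rotation orbit of `F`, then
`S * Fᵀ` is symmetric. -/
theorem isSymm_mul_transpose_of_trace_skew_eq_zero {S F : Matrix n n ℝ}
    (h : ∀ A : Matrix n n ℝ, Aᵀ = -A → trace (Sᵀ * (A * F)) = 0) :
    (S * Fᵀ).IsSymm := by
  set A : Matrix n n ℝ := S * Fᵀ - F * Sᵀ with hA
  have hskew : Aᵀ = -A := by simp [hA]
  have h₁ : trace (F * Sᵀ * A) = 0 := by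
    rw [← h A hskew, Matrix.mul_assoc, trace_mul_comm, Matrix.mul_assoc]
  have h₂ : trace (S * Fᵀ * A) = 0 := by
    rw [← trace_transpose, transpose_mul, hskew, neg_mul, trace_neg, trace_mul_comm]
    simpa using h₁
  have hzero : A = 0 := by
    rw [← trace_conjTranspose_mul_self_eq_zero_iff, conjTranspose_eq_transpose_of_trivial, hskew,
      neg_mul]
    nth_rewrite 1 [hA]
    rw [sub_mul, trace_neg, trace_sub, h₁, h₂]
    simp
  rw [IsSymm, transpose_mul, transpose_transpose]
  exact (sub_eq_zero.1 hzero).symm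

/-- If `S * Fᵀ` is symmetric, then the power `S : G` depends on `G` only through
`Gᵀ * F + Fᵀ * G`. -/
theorem trace_transpose_mul_eq_half [DecidableEq n] {S F : Matrix n n ℝ}
    (hF : IsUnit F.det) (h : (S * Fᵀ).IsSymm) (G : Matrix n n ℝ) :
    trace (Sᵀ * G) = 1 / 2 * trace ((F⁻¹ * S)ᵀ * (Gᵀ * F + Fᵀ * G)) := by
  have hsymm : F * Sᵀ = S * Fᵀ := by simpa [IsSymm] using h
  have hFt : Fᵀ * (Fᵀ)⁻¹ = 1 := mul_nonsing_inv _ (by rwa [det_transpose])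
  have hB : Sᵀ * (Fᵀ)⁻¹ = F⁻¹ * S := by
    calc Sᵀ * (Fᵀ)⁻¹ = F⁻¹ * (F * Sᵀ) * (Fᵀ)⁻¹ := by
          rw [← Matrix.mul_assoc F⁻¹, nonsing_inv_mul _ hF, Matrix.one_mul]
      _ = F⁻¹ * S := by
          rw [hsymm, Matrix.mul_assoc, Matrix.mul_assoc S, hFt, Matrix.mul_one]
  have hBt : (F⁻¹ * S)ᵀ = Sᵀ * (Fᵀ)⁻¹ := by rw [transpose_mul, transpose_nonsing_inv]
  have h₁ : trace ((F⁻¹ * S)ᵀ * (Fᵀ * G)) = trace (Sᵀ * G) := by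
    rw [hBt, Matrix.mul_assoc, ← Matrix.mul_assoc (Fᵀ)⁻¹,
      nonsing_inv_mul _ (by rwa [det_transpose]), Matrix.one_mul]
  have h₂ : trace ((F⁻¹ * S)ᵀ * (Gᵀ * F)) = trace (Sᵀ * G) := by
    rw [← h₁, ← trace_transpose, transpose_mul, transpose_mul, transpose_transpose,
      transpose_transpose, trace_mul_comm, hBt, hB]
  rw [Matrix.mul_add, trace_add, h₁, h₂]
  ring

end SkewSymmetric

section FrameIndifference

attribute [local instance] Matrix.frobeniusNormedRing Matrix.frobeniusNormedAlgebra

/-- The derivative of a rotation-invariant function vanishes along the rotation orbit. -/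
theorem HasFDerivAt.apply_skew_mul_eq_zero {n : Type*} [Fintype n] [DecidableEq n]
    {w : Matrix n n ℝ → ℝ} {L : Matrix n n ℝ →L[ℝ] ℝ} {F A : Matrix n n ℝ}
    (hL : HasFDerivAt w L F)
    (hw : ∀ Q : Matrix n n ℝ, Qᵀ * Q = 1 → Q.det = 1 → w (Q * F) = w F) (hA : Aᵀ = -A) :
    L (A * F) = 0 := by
  have hexp : HasDerivAt (fun u : ℝ => NormedSpace.exp (u • A) * F) (A * F) 0 := by
    have h := (hasDerivAt_exp_smul_const (𝕂 := ℝ) A 0).mul_const F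
    rw [zero_smul, NormedSpace.exp_zero, one_mul] at h
    exact h
  have hcomp : HasDerivAt (fun u : ℝ => w (NormedSpace.exp (u • A) * F)) (L (A * F)) 0 :=
    HasFDerivAt.comp_hasDerivAt_of_eq (0 : ℝ) hL hexp (by simp)
  have hconst : (fun u : ℝ => w (NormedSpace.exp (u • A) * F)) = fun _ => w F := by
    funext u
    have hu : (u • A)ᵀ = -(u • A) := by simp [hA]
    exact hw _ (transpose_exp_mul_exp_of_skew hu) (det_exp_of_skew hu)
  rw [hconst] at hcomp
  exact hcomp.unique (hasDerivAt_const _ _)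

end FrameIndifference

/-- If `‖f‖ ≤ K / max t 1` and `‖f'‖ ≤ K / (max t 1) ^ 2`, then `t ↦ t • f t` is bounded by `K`
and `2 * K`-Lipschitz on the positive half-line. -/
theorem mul_norm_le_add_min_of_deriv_bound {E : Type*} [NormedAddCommGroup E] [NormedSpace ℝ E]
    {f f' : ℝ → E} {K : ℝ} (hK : 0 ≤ K)
    (hf : ∀ t, 0 < t → HasDerivAt f (f' t) t)
    (hb : ∀ t, 0 < t → ‖f t‖ ≤ K / max t 1)
    (hb' : ∀ t, 0 < t → ‖f' t‖ ≤ K / (max t 1) ^ 2)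
    {s t : ℝ} (hs : 0 < s) (ht : 0 < t) :
    t * ‖f t‖ ≤ s * ‖f s‖ + 2 * K * min |t - s| 1 := by
  have hmax (r : ℝ) : 0 < max r 1 := lt_max_of_lt_right one_pos
  have hbounded (r : ℝ) (hr : 0 < r) : r * ‖f r‖ ≤ K := by
    calc r * ‖f r‖ ≤ max r 1 * (K / max r 1) := by
          gcongr
          exacts [le_max_left _ _, hb r hr]
      _ = K := mul_div_cancel₀ K (hmax r).ne'
  have hderiv (r : ℝ) (hr : 0 < r) : ‖r • f' r + (1 : ℝ) • f r‖ ≤ 2 * K := by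
    have h₁ : ‖r • f' r‖ ≤ K := by
      rw [norm_smul, Real.norm_of_nonneg hr.le]
      calc r * ‖f' r‖ ≤ (max r 1) ^ 2 * (K / (max r 1) ^ 2) := by
            gcongr
            · exact (le_max_left _ _).trans (le_self_pow₀ (le_max_right _ _) two_ne_zero)
            · exact hb' r hr
        _ = K := mul_div_cancel₀ K (pow_pos (hmax r) 2).ne'
    have h₂ : ‖f r‖ ≤ K := (hb r hr).trans (div_le_self hK (le_max_right _ _))
    rw [one_smul]
    linarith [norm_add_le (r • f' r) (f r)]
  rcases le_total |t - s| 1 with h | h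
  · rw [min_eq_left h]
    have hlip : ‖t • f t - s • f s‖ ≤ 2 * K * ‖t - s‖ :=
      Convex.norm_image_sub_le_of_norm_hasDerivWithin_le (s := Set.Ioi 0)
        (fun r hr => ((hasDerivAt_id r).smul (hf r hr)).hasDerivWithinAt)
        (fun r hr => hderiv r hr) (convex_Ioi 0) hs ht
    have hsub := norm_sub_norm_le (t • f t) (s • f s)
    rw [norm_smul, norm_smul, Real.norm_of_nonneg ht.le, Real.norm_of_nonneg hs.le] at hsub
    rw [Real.norm_eq_abs] at hlip
    linarith
  · rw [min_eq_right h]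
    have := mul_nonneg hs.le (norm_nonneg (f s))
    linarith [hbounded t ht]

/-- Adiabatic heat-source bound: there is a constant `C > 0` depending only on
`M` and `c₀` such that for any dimension `d ≥ 1`, any critical temperature
`θ_c > 0`, any symmetric-valued, self-adjoint, coercive dissipation tensor `D`,
and any frame-indifferent potential `W` with Fréchet derivative represented by
`S(F,θ)` (Frobenius inner product) whose `θ`-derivatives satisfy
`‖∂_θ S(F,θ)‖ ≤ M(1+|F|)/max(θ,1)` and `‖∂_θ² S(F,θ)‖ ≤ M(1+|F|)/max(θ,1)²`,
one has, for all `F ∈ GL⁺(d)`, `Ḟ`, `θ > 0`,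
`|θ (∂_θ S(F,θ)) : Ḟ| ≤ C |F⁻¹| (1+|F|) (θ_c ‖∂_θ S(F,θ_c)‖ + min(|θ−θ_c|,1)) ξ(F,Ḟ)^{1/2}`. -/
theorem adiabatic_term_dissipation_bound (M c₀ : ℝ) (hM : 0 ≤ M) (hc₀ : 0 < c₀) :
    ∃ C : ℝ, 0 < C ∧
      ∀ (d : ℕ), 1 ≤ d →
      ∀ (θc : ℝ), 0 < θc →
      ∀ (D : Matrix (Fin d) (Fin d) ℝ →ₗ[ℝ] Matrix (Fin d) (Fin d) ℝ),
        (∀ A : Matrix (Fin d) (Fin d) ℝ, (D A)ᵀ = D A) →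
        (∀ A B : Matrix (Fin d) (Fin d) ℝ,
          Matrix.trace ((D A)ᵀ * B) = Matrix.trace (Aᵀ * D B)) →
        (∀ A : Matrix (Fin d) (Fin d) ℝ, Aᵀ = A →
          c₀ * ‖A‖ ^ 2 ≤ Matrix.trace ((D A)ᵀ * A)) →
      ∀ (W : Matrix (Fin d) (Fin d) ℝ → ℝ → ℝ)
        (S Sθ Sθθ : Matrix (Fin d) (Fin d) ℝ → ℝ → Matrix (Fin d) (Fin d) ℝ),
        (∀ (Q F : Matrix (Fin d) (Fin d) ℝ) (θ : ℝ),
          Qᵀ * Q = 1 → Q.det = 1 → 0 < F.det → 0 < θ → W (Q * F) θ = W F θ) →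
        (∀ (F : Matrix (Fin d) (Fin d) ℝ) (θ : ℝ), 0 < F.det → 0 < θ →
          ∃ L : Matrix (Fin d) (Fin d) ℝ →L[ℝ] ℝ,
            HasFDerivAt (fun X => W X θ) L F ∧
            ∀ G : Matrix (Fin d) (Fin d) ℝ, L G = Matrix.trace ((S F θ)ᵀ * G)) →
        (∀ (F : Matrix (Fin d) (Fin d) ℝ) (θ : ℝ), 0 < F.det → 0 < θ →
          HasDerivAt (fun t => S F t) (Sθ F θ) θ) →
        (∀ (F : Matrix (Fin d) (Fin d) ℝ) (θ : ℝ), 0 < F.det → 0 < θ →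
          HasDerivAt (fun t => Sθ F t) (Sθθ F θ) θ) →
        (∀ (F : Matrix (Fin d) (Fin d) ℝ) (θ : ℝ), 0 < F.det → 0 < θ →
          ‖Sθ F θ‖ ≤ M * (1 + ‖F‖) / max θ 1) →
        (∀ (F : Matrix (Fin d) (Fin d) ℝ) (θ : ℝ), 0 < F.det → 0 < θ →
          ‖Sθθ F θ‖ ≤ M * (1 + ‖F‖) / (max θ 1) ^ 2) →
      ∀ (F Fdot : Matrix (Fin d) (Fin d) ℝ) (θ : ℝ), 0 < F.det → 0 < θ →
        |θ * Matrix.trace ((Sθ F θ)ᵀ * Fdot)| ≤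
          C * ‖F⁻¹‖ * (1 + ‖F‖) * (θc * ‖Sθ F θc‖ + min |θ - θc| 1) *
            Real.sqrt
              (Matrix.trace
                ((D (Fdotᵀ * F + Fᵀ * Fdot))ᵀ * (Fdotᵀ * F + Fᵀ * Fdot))) := by
  refine ⟨(1 + 2 * M) / (2 * √c₀), by positivity, ?_⟩
  intro d _ θc hθc D _ _ hD W S Sθ Sθθ hW hS hSθ hSθθ hb hb' F Fdot θ hF hθ
  have hskew (t : ℝ) (ht : 0 < t) (A : Matrix (Fin d) (Fin d) ℝ) (hA : Aᵀ = -A) :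
      trace ((S F t)ᵀ * (A * F)) = 0 := by
    obtain ⟨L, hL, hLS⟩ := hS F t hF ht
    rw [← hLS]
    exact hL.apply_skew_mul_eq_zero (fun Q hQ hdet => hW Q F t hQ hdet hF ht) hA
  have hsymm : (Sθ F θ * Fᵀ).IsSymm := by
    refine isSymm_mul_transpose_of_trace_skew_eq_zero fun A hA => ?_
    have hzero : (fun t => trace ((S F t)ᵀ * (A * F))) =ᶠ[nhds θ] fun _ => 0 := by
      filter_upwards [lt_mem_nhds hθ] with t ht using hskew t ht A hA
    exact ((hSθ F θ hF hθ).trace_transpose_mul (A * F)).unique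
      ((hasDerivAt_const θ (0 : ℝ)).congr_of_eventuallyEq hzero)
  set Cdot : Matrix (Fin d) (Fin d) ℝ := Fdotᵀ * F + Fᵀ * Fdot with hCdot
  have hCsymm : Cdotᵀ = Cdot := by simp [hCdot, add_comm]
  have hcoercive : √c₀ * ‖Cdot‖ ≤ √(trace ((D Cdot)ᵀ * Cdot)) := by
    refine Real.le_sqrt_of_sq_le ?_
    rw [mul_pow, Real.sq_sqrt hc₀.le]
    exact hD Cdot hCsymm
  have hpower : |trace ((Sθ F θ)ᵀ * Fdot)| ≤ 1 / 2 * (‖F⁻¹‖ * ‖Sθ F θ‖ * ‖Cdot‖) := by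
    rw [trace_transpose_mul_eq_half hF.ne'.isUnit hsymm, abs_mul, abs_of_pos one_half_pos]
    gcongr
    exact (abs_trace_transpose_mul_le _ _).trans
      (mul_le_mul_of_nonneg_right (frobenius_norm_mul _ _) (norm_nonneg _))
  have htemp : θ * ‖Sθ F θ‖ ≤
      (1 + 2 * M) * (1 + ‖F‖) * (θc * ‖Sθ F θc‖ + min |θ - θc| 1) := by
    have h := mul_norm_le_add_min_of_deriv_bound (K := M * (1 + ‖F‖)) (by positivity)
      (fun t ht => hSθθ F t hF ht) (fun t ht => hb F t hF ht) (fun t ht => hb' F t hF ht) hθc hθ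
    have hm : 0 ≤ min |θ - θc| 1 := le_min (abs_nonneg _) zero_le_one
    have hc : 0 ≤ θc * ‖Sθ F θc‖ := by positivity
    have hone : 1 ≤ (1 + 2 * M) * (1 + ‖F‖) :=
      one_le_mul_of_one_le_of_one_le (by linarith) (by linarith [norm_nonneg F])
    calc θ * ‖Sθ F θ‖ ≤ 1 * (θc * ‖Sθ F θc‖) + 2 * (M * (1 + ‖F‖)) * min |θ - θc| 1 := by
          rwa [one_mul]
      _ ≤ (1 + 2 * M) * (1 + ‖F‖) * (θc * ‖Sθ F θc‖)
          + (1 + 2 * M) * (1 + ‖F‖) * min |θ - θc| 1 := by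
          gcongr ?_ * _ + ?_ * _
          linarith [norm_nonneg F]
      _ = _ := by ring
  have hsqrt : 0 < √c₀ := Real.sqrt_pos.2 hc₀
  rw [abs_mul, abs_of_pos hθ]
  calc θ * |trace ((Sθ F θ)ᵀ * Fdot)|
      ≤ θ * (1 / 2 * (‖F⁻¹‖ * ‖Sθ F θ‖ * ‖Cdot‖)) := by gcongr
    _ = (θ * ‖Sθ F θ‖) * (1 / (2 * √c₀) * ‖F⁻¹‖ * (√c₀ * ‖Cdot‖)) := by field_simp
    _ ≤ ((1 + 2 * M) * (1 + ‖F‖) * (θc * ‖Sθ F θc‖ + min |θ - θc| 1)) *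
          (1 / (2 * √c₀) * ‖F⁻¹‖ * √(trace ((D Cdot)ᵀ * Cdot))) := by
        gcongr
    _ = _ := by ring
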